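/- Let H₀, G, G₀, K, E, E' be groups with group homomorphisms σ : E → H₀, ι : G → E, ρ : E → G₀, κ' : G → E', σ' : E' → G₀, ι' : K → E' and an action ξ : G₀ → Aut(G), satisfying: ρ ∘ ι = σ' ∘ κ'; ι is injective with image ker σ; ι' is injective with image ker σ'; e * ι(g) * e⁻¹ = ι(ξ(ρ e)(g)) for all e ∈ E, g ∈ G; e' * κ'(g) * e'⁻¹ = κ'(ξ(σ' e')(g)) for all e' ∈ E', g ∈ G. Let P = {(e,e') ∈ E × E' : ρ(e) = σ'(e')}, let N = {(ι g, κ' g) : g ∈ G} (a normal subgroup of P), and let q : P → P/N be the quotient map. Then the assignment (e,e') ↦ σ(e) descends to a group homomorphism σ̄ : P/N → H₀, and the kernel of σ̄ is exactly the image of K under the homomorphism k ↦ q(1, ι'(k)). -/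

import Mathlib

/-- in the composition of two butterflies of groups, the map
`(e,e') ↦ σ e` descends to a homomorphism `σ̄ : P/N → H₀` whose kernel is exactly the
image of `K` under `k ↦ q(1, ι' k)`. -/
theorem butterfly_group_composite_kernel
    {H₀ G G₀ K E E' : Type*}
    [Group H₀] [Group G] [Group G₀] [Group K] [Group E] [Group E']
    (σ : E →* H₀) (ι : G →* E) (ρ : E →* G₀)
    (κ' : G →* E') (σ' : E' →* G₀) (ι' : K →* E')
    (ξ : G₀ →* MulAut G)
    (ha : ∀ g, ρ (ι g) = σ' (κ' g))
    (hιinj : Function.Injective ι) (hιker : ι.range = σ.ker)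
    (hι'inj : Function.Injective ι') (hι'ker : ι'.range = σ'.ker)
    (hb : ∀ (e : E) (g : G), e * ι g * e⁻¹ = ι (ξ (ρ e) g))
    (hc : ∀ (e' : E') (g : G), e' * κ' g * e'⁻¹ = κ' (ξ (σ' e') g))
    (hN : ((ι.prod κ').range.subgroupOf
        ((ρ.comp (MonoidHom.fst E E')).eqLocus (σ'.comp (MonoidHom.snd E E')))).Normal) :
    haveI := hN
    ∃ σbar :
        (((ρ.comp (MonoidHom.fst E E')).eqLocus (σ'.comp (MonoidHom.snd E E'))) ⧸
          ((ι.prod κ').range.subgroupOf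
            ((ρ.comp (MonoidHom.fst E E')).eqLocus (σ'.comp (MonoidHom.snd E E'))))) →* H₀,
      (∀ p, σbar (QuotientGroup.mk p) = σ (p : E × E').1) ∧
      (∀ x, x ∈ σbar.ker ↔
        ∃ (k : K)
          (p : ((ρ.comp (MonoidHom.fst E E')).eqLocus (σ'.comp (MonoidHom.snd E E')))),
          (p : E × E') = (1, ι' k) ∧ QuotientGroup.mk p = x) := by
  haveI := hN
  have hσι : ∀ g, σ (ι g) = 1 := fun g => by
    have h : ι g ∈ σ.ker := hιker ▸ ⟨g, rfl⟩
    exact h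
  refine ⟨QuotientGroup.lift _ ((σ.comp (MonoidHom.fst E E')).comp (Subgroup.subtype _)) ?_,
    fun p => rfl, ?_⟩
  · rintro ⟨p, hp⟩ hpN
    obtain ⟨g, rfl⟩ := Subgroup.mem_subgroupOf.1 hpN
    exact hσι g
  · intro x
    constructor
    · induction x using QuotientGroup.induction_on with
      | H p =>
        obtain ⟨⟨e, e'⟩, hp⟩ := p
        intro hx
        have he : e ∈ σ.ker := hx
        rw [← hιker] at he
        obtain ⟨g, rfl⟩ := he
        have hp' : ρ (ι g) = σ' e' := hp
        have h1 : σ' (e' * (κ' g)⁻¹) = 1 := by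
          rw [map_mul, map_inv, ← hp', ← ha, mul_inv_cancel]
        have h2 : e' * (κ' g)⁻¹ ∈ ι'.range := by
          rw [hι'ker]; exact h1
        obtain ⟨k, hk⟩ := h2
        refine ⟨k, ⟨(1, ι' k), ?_⟩, rfl, ?_⟩
        · change ρ 1 = σ' (ι' k)
          rw [hk, h1, map_one]
        · rw [QuotientGroup.eq, Subgroup.mem_subgroupOf]
          refine ⟨g, ?_⟩
          change (ι g, κ' g) = ((1 : E)⁻¹ * ι g, (ι' k)⁻¹ * e')
          rw [hk]
          simp
    · rintro ⟨k, p, hp, rfl⟩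
      change σ (p : E × E').1 = 1
      rw [hp, map_one]
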